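/- Let D be an open subset of the half-plane {(z,ρ) ∈ ℝ² : ρ > 0} and let E : D → ℂ be twice continuously differentiable with Re E > 0 on D. Define the 2×2 matrix-valued function G = (1/(E + Ē)) · [[2, i(E − Ē)], [i(E − Ē), 2EĒ]]. Then G(z,ρ) is invertible at every point of D, and E satisfies the Ernst equation (E + Ē)(E_zz + ρ⁻¹E_ρ + E_ρρ) = 2(E_z² + E_ρ²) on D if and only if G satisfies the matrix equation ∂_ρ(ρ G_ρ G⁻¹) + ∂_z(ρ G_z G⁻¹) = 0 on D. -/

import Mathlib

open Complex Matrix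

noncomputable section

/-- Entrywise partial derivative of a matrix-valued function with respect to
the first coordinate `z`. -/
def matPz (F : ℝ × ℝ → Matrix (Fin 2) (Fin 2) ℂ) (p : ℝ × ℝ) :
    Matrix (Fin 2) (Fin 2) ℂ :=
  Matrix.of fun i j => deriv (fun t : ℝ => F (t, p.2) i j) p.1

/-- Entrywise partial derivative of a matrix-valued function with respect to
the second coordinate `ρ`. -/
def matPr (F : ℝ × ℝ → Matrix (Fin 2) (Fin 2) ℂ) (p : ℝ × ℝ) :
    Matrix (Fin 2) (Fin 2) ℂ :=
  Matrix.of fun i j => deriv (fun t : ℝ => F (p.1, t) i j) p.2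

/-- Partial derivative of a complex-valued function with respect to `z`. -/
def pz (f : ℝ × ℝ → ℂ) (p : ℝ × ℝ) : ℂ := deriv (fun t : ℝ => f (t, p.2)) p.1

/-- Partial derivative of a complex-valued function with respect to `ρ`. -/
def pr (f : ℝ × ℝ → ℂ) (p : ℝ × ℝ) : ℂ := deriv (fun t : ℝ => f (p.1, t)) p.2

def gMat (a : ℂ) : Matrix (Fin 2) (Fin 2) ℂ :=
  (a + star a)⁻¹ • !![2, Complex.I * (a - star a);
          Complex.I * (a - star a), 2 * a * star a]

def kMat (a a' : ℂ) : Matrix (Fin 2) (Fin 2) ℂ :=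
  ((a + star a) ^ 2)⁻¹ • !![-2 * (a' * star a + a * star a'), 2 * Complex.I * (a' - star a');
          2 * Complex.I * (a' * star a ^ 2 - a ^ 2 * star a'), 2 * (a' * star a + a * star a')]

def gMat' (a a' : ℂ) : Matrix (Fin 2) (Fin 2) ℂ :=
  ((a + star a) ^ 2)⁻¹ • !![-2 * (a' + star a'), 2 * Complex.I * (a' * star a - a * star a');
          2 * Complex.I * (a' * star a - a * star a'), 2 * (a' * star a ^ 2 + a ^ 2 * star a')]

def kMat' (r r' a a' d d' : ℂ) : Matrix (Fin 2) (Fin 2) ℂ :=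
  (r' * (a + star a) - 2 * r * (a' + star a')) • ((a + star a) ^ 3)⁻¹ •
    !![-2 * (d * star a + a * star d), 2 * Complex.I * (d - star d);
          2 * Complex.I * (d * star a ^ 2 - a ^ 2 * star d), 2 * (d * star a + a * star d)]
  + r • ((a + star a) ^ 2)⁻¹ •
    !![-2 * (d' * star a + d * star a' + a' * star d + a * star d'), 2 * Complex.I * (d' - star d');
      2 * Complex.I * (d' * star a ^ 2 + d * (2 * star a * star a') - 2 * a * a' * star d
        - a ^ 2 * star d'),
      2 * (d' * star a + d * star a' + a' * star d + a * star d')]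

theorem sum_ne {a : ℂ} (h : 0 < a.re) : a + star a ≠ 0 := by
  intro h0
  have := congrArg Complex.re h0
  simp at this
  linarith

theorem gMat_inv {a : ℂ} (h : 0 < a.re) : gMat a * ((a + star a)⁻¹ •
    !![2 * a * star a, -(Complex.I * (a - star a)); -(Complex.I * (a - star a)), 2]) = 1 := by
  have hs := sum_ne h
  unfold gMat
  generalize star a = b at *
  ext i j
  fin_cases i <;> fin_cases j <;> simp [Matrix.mul_apply, Fin.sum_univ_two] <;>
    field_simp <;> ring_nf <;> simp [Complex.I_sq] <;> ring

theorem gMat_mul {a : ℂ} (a' : ℂ) (h : 0 < a.re) : gMat' a a' * (gMat a)⁻¹ = kMat a a' := by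
  have hs := sum_ne h
  rw [Matrix.inv_eq_right_inv (gMat_inv h)]
  unfold gMat' kMat
  generalize star a = b at *
  generalize star a' = b' at *
  ext i j
  fin_cases i <;> fin_cases j <;> simp [Matrix.mul_apply, Fin.sum_univ_two] <;>
    field_simp <;> ring_nf <;> simp [Complex.I_sq] <;> ring

theorem gMat_deriv {e : ℝ → ℂ} {e' : ℂ} {t : ℝ} (he : HasDerivAt e e' t) (h : 0 < (e t).re)
    (i j : Fin 2) : HasDerivAt (fun t => gMat (e t) i j) (gMat' (e t) e' i j) t := by
  have hs := sum_ne h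
  have hb := he.star
  have h1 := (he.add hb).inv hs
  have h2 := h1.mul_const 2
  have h3 := h1.mul ((he.sub hb).const_mul Complex.I)
  have h4 := h1.mul ((he.const_mul 2).mul hb)
  unfold gMat gMat'
  fin_cases i <;> fin_cases j <;> simp
  · refine h2.congr_deriv ?_
    simp; ring
  · refine h3.congr_deriv ?_
    simp at hs ⊢; field_simp; ring
  · refine h3.congr_deriv ?_
    simp at hs ⊢; field_simp; ring
  · refine h4.congr_deriv ?_
    simp at hs ⊢; field_simp; ring

theorem kMat_deriv {r e d : ℝ → ℂ} {r' e' d' : ℂ} {t : ℝ} (hr : HasDerivAt r r' t)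
    (he : HasDerivAt e e' t) (hd : HasDerivAt d d' t) (h : 0 < (e t).re)
    (i j : Fin 2) : HasDerivAt (fun t => (r t • kMat (e t) (d t)) i j)
      (kMat' (r t) r' (e t) e' (d t) d' i j) t := by
  have hs := sum_ne h
  have hb := he.star
  have hc := hd.star
  have h1 := ((he.add hb).pow 2).inv (pow_ne_zero 2 hs)
  have h2 := (hd.mul hb).add (he.mul hc)
  have g1 := hr.mul (h1.mul (h2.const_mul (-2)))
  have g2 := hr.mul (h1.mul ((hd.sub hc).const_mul (2 * Complex.I)))
  have g3 := hr.mul (h1.mul (((hd.mul (hb.pow 2)).sub ((he.pow 2).mul hc)).const_mul (2 * Complex.I)))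
  have g4 := hr.mul (h1.mul (h2.const_mul 2))
  unfold kMat kMat'
  fin_cases i <;> fin_cases j
  · refine (g1.congr_deriv ?_).congr_of_eventuallyEq (.of_forall fun x => by simp)
    simp at hs ⊢; field_simp; ring
  · refine (g2.congr_deriv ?_).congr_of_eventuallyEq (.of_forall fun x => by simp)
    simp at hs ⊢; field_simp; ring
  · refine (g3.congr_deriv ?_).congr_of_eventuallyEq (.of_forall fun x => by simp)
    simp at hs ⊢; field_simp; ring
  · refine (g4.congr_deriv ?_).congr_of_eventuallyEq (.of_forall fun x => by simp)
    simp at hs ⊢; field_simp; ring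

theorem final_alg {r a az ar azz arr : ℂ} (hr : r ≠ 0) (hrr : star r = r) (h : 0 < a.re) :
    (a + star a) * (azz + r⁻¹ * ar + arr) = 2 * (az ^ 2 + ar ^ 2) ↔
    kMat' r 1 a ar ar arr + kMat' r 0 a az az azz = 0 := by
  have hs := sum_ne h
  set N := (a + star a) * (azz + r⁻¹ * ar + arr) - 2 * (az ^ 2 + ar ^ 2) with hN
  have hM : star N = (a + star a) * (star azz + r⁻¹ * star ar + star arr)
      - 2 * (star az ^ 2 + star ar ^ 2) := by
    have : star r⁻¹ = r⁻¹ := by rw [star_inv₀, hrr]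
    rw [hN]
    simp only [star_sub, star_mul', star_add, star_pow, star_star, this, show star (2 : ℂ) = 2 by simp]
    ring
  have key : kMat' r 1 a ar ar arr + kMat' r 0 a az az azz =
      (r / (a + star a) ^ 3) • !![-2 * (star a * N + a * star N), 2 * Complex.I * (N - star N);
        2 * Complex.I * (star a ^ 2 * N - a ^ 2 * star N), 2 * (star a * N + a * star N)] := by
    rw [hM, hN]
    clear hM hN N
    unfold kMat'
    generalize star a = b at *
    generalize star ar = br at *
    generalize star az = bz at *
    generalize star arr = brr at *
    generalize star azz = bzz at *
    ext i j
    fin_cases i <;> fin_cases j <;> simp <;> field_simp <;> ring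
  rw [key, ← sub_eq_zero, ← hN]
  constructor
  · intro h0
    rw [h0]
    ext i j
    fin_cases i <;> fin_cases j <;> simp
  · intro h0
    have hc : r / (a + star a) ^ 3 ≠ 0 := div_ne_zero hr (pow_ne_zero 3 hs)
    have h1 := (smul_eq_zero.1 h0).resolve_left hc
    have e1 : 2 * (star a * N + a * star N) = 0 := congrFun (congrFun h1 1) 1
    have e2 : 2 * Complex.I * (N - star N) = 0 := congrFun (congrFun h1 0) 1
    have e3 : N - star N = 0 := (mul_eq_zero.1 e2).resolve_left (by simp)
    have e4 : (a + star a) * N = 0 := by linear_combination e1 / 2 + a * e3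
    exact (mul_eq_zero.1 e4).resolve_left hs

theorem hasDerivAt_pz {f : ℝ × ℝ → ℂ} {p : ℝ × ℝ} (h : DifferentiableAt ℝ f p) :
    HasDerivAt (fun t : ℝ => f (t, p.2)) (fderiv ℝ f p (1, 0)) p.1 :=
  HasFDerivAt.comp_hasDerivAt (f := fun t : ℝ => (t, p.2)) p.1 h.hasFDerivAt
    ((hasDerivAt_id p.1).prodMk (hasDerivAt_const p.1 p.2))

theorem hasDerivAt_pr {f : ℝ × ℝ → ℂ} {p : ℝ × ℝ} (h : DifferentiableAt ℝ f p) :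
    HasDerivAt (fun t : ℝ => f (p.1, t)) (fderiv ℝ f p (0, 1)) p.2 :=
  HasFDerivAt.comp_hasDerivAt (f := fun t : ℝ => (p.1, t)) p.2 h.hasFDerivAt
    ((hasDerivAt_const p.2 p.1).prodMk (hasDerivAt_id p.2))

theorem hasDerivAt_pz' {f : ℝ × ℝ → ℂ} {p : ℝ × ℝ} (h : DifferentiableAt ℝ f p) :
    HasDerivAt (fun t : ℝ => f (t, p.2)) (pz f p) p.1 :=
  (hasDerivAt_pz h).differentiableAt.hasDerivAt

theorem hasDerivAt_pr' {f : ℝ × ℝ → ℂ} {p : ℝ × ℝ} (h : DifferentiableAt ℝ f p) :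
    HasDerivAt (fun t : ℝ => f (p.1, t)) (pr f p) p.2 :=
  (hasDerivAt_pr h).differentiableAt.hasDerivAt

theorem ev_z {D : Set (ℝ × ℝ)} (hD : IsOpen D) {p : ℝ × ℝ} (hp : p ∈ D) :
    ∀ᶠ t in nhds p.1, (t, p.2) ∈ D :=
  (Continuous.prodMk_left p.2).continuousAt.eventually (hD.mem_nhds hp)

theorem ev_r {D : Set (ℝ × ℝ)} (hD : IsOpen D) {p : ℝ × ℝ} (hp : p ∈ D) :
    ∀ᶠ t in nhds p.2, (p.1, t) ∈ D :=
  (Continuous.prodMk_right p.1).continuousAt.eventually (hD.mem_nhds hp)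

theorem ernst_iff_matrix_form
    (D : Set (ℝ × ℝ)) (hD : IsOpen D) (hDhalf : ∀ p ∈ D, 0 < p.2)
    (E : ℝ × ℝ → ℂ) (hE : ContDiffOn ℝ 2 E D)
    (hRe : ∀ p ∈ D, 0 < (E p).re)
    (G : ℝ × ℝ → Matrix (Fin 2) (Fin 2) ℂ)
    (hG : ∀ p ∈ D, G p = (E p + star (E p))⁻¹ •
      !![2, Complex.I * (E p - star (E p));
          Complex.I * (E p - star (E p)), 2 * E p * star (E p)]) :
    (∀ p ∈ D, IsUnit (G p)) ∧
    ((∀ p ∈ D,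
        (E p + star (E p)) *
          (pz (pz E) p + (p.2 : ℂ)⁻¹ * pr E p + pr (pr E) p)
          = 2 * ((pz E p) ^ 2 + (pr E p) ^ 2)) ↔
      (∀ p ∈ D,
        matPr (fun q => (q.2 : ℂ) • (matPr G q * (G q)⁻¹)) p +
          matPz (fun q => (q.2 : ℂ) • (matPz G q * (G q)⁻¹)) p = 0)) := by
  have hdE : ∀ p ∈ D, DifferentiableAt ℝ E p := fun p hp =>
    (hE.contDiffAt (hD.mem_nhds hp)).differentiableAt (by norm_num)
  have hdF : ∀ p ∈ D, ∀ v, DifferentiableAt ℝ (fun q => fderiv ℝ E q v) p := fun p hp v =>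
    (((hE.contDiffAt (hD.mem_nhds hp)).fderiv_right (m := 1)
      (by norm_num)).differentiableAt (by norm_num)).clm_apply (differentiableAt_const v)
  have hdz : ∀ p ∈ D, DifferentiableAt ℝ (pz E) p := fun p hp =>
    (hdF p hp (1, 0)).congr_of_eventuallyEq (by
      filter_upwards [hD.mem_nhds hp] with q hq
      exact (hasDerivAt_pz (hdE q hq)).deriv)
  have hdr : ∀ p ∈ D, DifferentiableAt ℝ (pr E) p := fun p hp =>
    (hdF p hp (0, 1)).congr_of_eventuallyEq (by
      filter_upwards [hD.mem_nhds hp] with q hq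
      exact (hasDerivAt_pr (hdE q hq)).deriv)
  have hG' : ∀ p ∈ D, G p = gMat (E p) := hG
  have hGz : ∀ p ∈ D, matPz G p * (G p)⁻¹ = kMat (E p) (pz E p) := by
    intro p hp
    rw [← gMat_mul _ (hRe p hp), hG' p hp]
    congr 1
    ext i j
    refine HasDerivAt.deriv ?_
    refine (gMat_deriv (hasDerivAt_pz' (hdE p hp)) (hRe p hp) i j).congr_of_eventuallyEq ?_
    filter_upwards [ev_z hD hp] with t ht
    rw [hG' _ ht]
  have hGr : ∀ p ∈ D, matPr G p * (G p)⁻¹ = kMat (E p) (pr E p) := by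
    intro p hp
    rw [← gMat_mul _ (hRe p hp), hG' p hp]
    congr 1
    ext i j
    refine HasDerivAt.deriv ?_
    refine (gMat_deriv (hasDerivAt_pr' (hdE p hp)) (hRe p hp) i j).congr_of_eventuallyEq ?_
    filter_upwards [ev_r hD hp] with t ht
    rw [hG' _ ht]
  refine ⟨fun p hp => ?_, forall₂_congr fun p hp => ?_⟩
  · rw [hG' p hp]
    exact IsUnit.of_mul_eq_one _ (gMat_inv (hRe p hp))
  have hr0 : (p.2 : ℂ) ≠ 0 := by exact_mod_cast (hDhalf p hp).ne'
  rw [final_alg hr0 (by simp) (hRe p hp)]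
  have k1 : matPr (fun q => (q.2 : ℂ) • (matPr G q * (G q)⁻¹)) p =
      kMat' p.2 1 (E p) (pr E p) (pr E p) (pr (pr E) p) := by
    ext i j
    refine HasDerivAt.deriv ?_
    refine (kMat_deriv (r := fun t : ℝ => (t : ℂ)) (Complex.ofRealCLM.hasDerivAt.congr_deriv (by simp))
      (hasDerivAt_pr' (hdE p hp)) (hasDerivAt_pr' (hdr p hp)) (hRe p hp) i j).congr_of_eventuallyEq ?_
    filter_upwards [ev_r hD hp] with t ht
    rw [hGr _ ht]
  have k2 : matPz (fun q => (q.2 : ℂ) • (matPz G q * (G q)⁻¹)) p =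
      kMat' p.2 0 (E p) (pz E p) (pz E p) (pz (pz E) p) := by
    ext i j
    refine HasDerivAt.deriv ?_
    refine (kMat_deriv (r := fun _ : ℝ => (p.2 : ℂ)) (hasDerivAt_const _ _)
      (hasDerivAt_pz' (hdE p hp)) (hasDerivAt_pz' (hdz p hp)) (hRe p hp) i j).congr_of_eventuallyEq ?_
    filter_upwards [ev_z hD hp] with t ht
    rw [hGz _ ht]
  rw [k1, k2]
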